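/- A pair (w,m) of a woman and a man appears in at most one rotation in Π; that is, if ρ1 and ρ2 are rotations exposed in some stable matchings and the pair (w,m) appears in both, then ρ1 and ρ2 are equal up to cyclic shift. -/

import Mathlib

/-- A matching market: men `M` and women `W`; each man has a strict preference
order over `W ∪ {∅}` and each woman over `M ∪ {∅}`, encoded by injective rank
functions (a strictly higher rank means strictly more preferred); `none`
plays the role of `∅` (being unmatched), and partners ranked below `none`
are unacceptable. -/
structure Market (M W : Type*) where
  mRank : M → Option W → ℕ
  wRank : W → Option M → ℕ
  mRank_inj : ∀ m, Function.Injective (mRank m)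
  wRank_inj : ∀ w, Function.Injective (wRank w)

/-- A matching: `mu` assigns each man a woman or `none`, `nu` assigns each
woman a man or `none`, and `μ(m) = w ↔ μ(w) = m`. -/
structure Matching (M W : Type*) where
  mu : M → Option W
  nu : W → Option M
  consistent : ∀ m w, mu m = some w ↔ nu w = some m

variable {M W : Type*}

/-- Every matched agent prefers their partner to `∅`. -/
def Market.IndivRational (mkt : Market M W) (μ : Matching M W) : Prop :=
  (∀ m w, μ.mu m = some w → mkt.mRank m none < mkt.mRank m (some w)) ∧
  (∀ w m, μ.nu w = some m → mkt.wRank w none < mkt.wRank w (some m))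

/-- `(m, w)` is a blocking pair for `μ`: they are not matched to each other,
`w ≻_m μ(m)` and `m ≻_w μ(w)`. -/
def Market.Blocking (mkt : Market M W) (μ : Matching M W) (m : M) (w : W) : Prop :=
  μ.mu m ≠ some w ∧
  mkt.mRank m (μ.mu m) < mkt.mRank m (some w) ∧
  mkt.wRank w (μ.nu w) < mkt.wRank w (some m)

/-- A matching is stable if it is individually rational and has no blocking pair. -/
def Market.Stable (mkt : Market M W) (μ : Matching M W) : Prop :=
  mkt.IndivRational μ ∧ ∀ m w, ¬ mkt.Blocking μ m w

/-- Woman-dominance: `μ ≥ μ'` iff every woman weakly prefers her partner in `μ`. -/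
def Market.Dom (mkt : Market M W) (μ μ' : Matching M W) : Prop :=
  ∀ w, mkt.wRank w (μ'.nu w) ≤ mkt.wRank w (μ.nu w)

/-- Strict woman-dominance: `μ > μ'`. -/
def Market.StrictDom (mkt : Market M W) (μ μ' : Matching M W) : Prop :=
  mkt.Dom μ μ' ∧ μ ≠ μ'

/-- `μ'` covers `μ` in the woman-dominance order on stable matchings. -/
def Market.Covers (mkt : Market M W) (μ' μ : Matching M W) : Prop :=
  mkt.StrictDom μ' μ ∧
  ¬ ∃ μ'' : Matching M W, mkt.Stable μ'' ∧ mkt.StrictDom μ' μ'' ∧ mkt.StrictDom μ'' μ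

/-- `μ'` is the elimination of the list `ρ = [(w_0,m_0),…,(w_{k-1},m_{k-1})]`
from `μ`: `k ≥ 2`, the women (resp. men) in `ρ` are distinct, `μ(w_i) = m_i`,
`μ'(m_i) = w_{(i+1) mod k}`, and every agent not appearing in `ρ` has the same
partner in `μ` and `μ'`. -/
def Matching.IsElimOf (μ' μ : Matching M W) (ρ : List (W × M)) : Prop :=
  2 ≤ ρ.length ∧
  (ρ.map Prod.fst).Nodup ∧ (ρ.map Prod.snd).Nodup ∧
  (∀ i : Fin ρ.length, μ.nu (ρ.get i).1 = some (ρ.get i).2) ∧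
  (∀ i : Fin ρ.length, μ'.mu (ρ.get i).2 =
    some (ρ.get ⟨(i.1 + 1) % ρ.length,
      Nat.mod_lt _ (Nat.lt_of_le_of_lt (Nat.zero_le _) i.isLt)⟩).1) ∧
  (∀ m : M, m ∉ ρ.map Prod.snd → μ'.mu m = μ.mu m) ∧
  (∀ w : W, w ∉ ρ.map Prod.fst → μ'.nu w = μ.nu w)

/-- `ρ` is a rotation exposed in `μ`: the elimination of `ρ` from `μ` is a
stable matching which covers `μ`. -/
def Market.ExposedRotation (mkt : Market M W) (μ : Matching M W) (ρ : List (W × M)) : Prop :=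
  ∃ μ' : Matching M W, Matching.IsElimOf μ' μ ρ ∧ mkt.Stable μ' ∧ mkt.Covers μ' μ

/-- `ρ` belongs to the set `Π` of all rotations, i.e. it is exposed in some
stable matching. -/
def Market.InPi (mkt : Market M W) (ρ : List (W × M)) : Prop :=
  ∃ μ : Matching M W, mkt.Stable μ ∧ mkt.ExposedRotation μ ρ

/-- The cyclically next index in a rotation. -/
def RotNext (ρ : List (W × M)) (i : Fin ρ.length) : Fin ρ.length :=
  ⟨(i.1 + 1) % ρ.length, Nat.mod_lt _ (Nat.lt_of_le_of_lt (Nat.zero_le _) i.isLt)⟩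

/-- The cyclically previous index in a rotation. -/
def RotPrev (ρ : List (W × M)) (i : Fin ρ.length) : Fin ρ.length :=
  ⟨(i.1 + ρ.length - 1) % ρ.length, Nat.mod_lt _ (Nat.lt_of_le_of_lt (Nat.zero_le _) i.isLt)⟩

/-- `ρ` moves man `m` from `w` to `w'` (i.e. `m = m_i`, `w = w_i`, `w' = w_{i+1}`). -/
def MovesManFromTo (ρ : List (W × M)) (m : M) (w w' : W) : Prop :=
  ∃ i : Fin ρ.length, (ρ.get i).2 = m ∧ (ρ.get i).1 = w ∧ (ρ.get (RotNext ρ i)).1 = w'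

/-- `ρ` moves woman `w` from `m` to `m'` (i.e. `w = w_i`, `m = m_i`, `m' = m_{i-1}`). -/
def MovesWomanFromTo (ρ : List (W × M)) (w : W) (m m' : M) : Prop :=
  ∃ i : Fin ρ.length, (ρ.get i).1 = w ∧ (ρ.get i).2 = m ∧ (ρ.get (RotPrev ρ i)).2 = m'

/-- `ρ1` is a type 1 predecessor of `ρ2`: `ρ1` moves some man `m` to a woman
`w` and the pair `(w, m)` appears in `ρ2`. -/
def Market.Type1Pred (_mkt : Market M W) (ρ1 ρ2 : List (W × M)) : Prop :=
  ∃ (w : W) (m : M), (∃ w0 : W, MovesManFromTo ρ1 m w0 w) ∧ (w, m) ∈ ρ2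

/-- `ρ1` is a type 2 predecessor of `ρ2`: `ρ1` moves some woman `w` from a man
strictly below `m` to a man strictly above `m`, and `ρ2` moves `m` from a woman
strictly above `w` to a woman strictly below `w`. -/
def Market.Type2Pred (mkt : Market M W) (ρ1 ρ2 : List (W × M)) : Prop :=
  ∃ (m : M) (w : W) (mlo mhi : M) (whi wlo : W),
    MovesWomanFromTo ρ1 w mlo mhi ∧
    mkt.wRank w (some mlo) < mkt.wRank w (some m) ∧
    mkt.wRank w (some m) < mkt.wRank w (some mhi) ∧
    MovesManFromTo ρ2 m whi wlo ∧
    mkt.mRank m (some wlo) < mkt.mRank m (some w) ∧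
    mkt.mRank m (some w) < mkt.mRank m (some whi)

/-- `ρ1` is a (type 1 or type 2) predecessor of `ρ2`; these are the edges of
the predecessor graph `G(Π)`. -/
def Market.Pred (mkt : Market M W) (ρ1 ρ2 : List (W × M)) : Prop :=
  mkt.Type1Pred ρ1 ρ2 ∨ mkt.Type2Pred ρ1 ρ2

/-- `σ` assigns each woman the more preferred of her partners in `μ` and `μ'`. -/
def Market.IsJoin (mkt : Market M W) (μ μ' σ : Matching M W) : Prop :=
  ∀ w, σ.nu w = if mkt.wRank w (μ'.nu w) ≤ mkt.wRank w (μ.nu w) then μ.nu w else μ'.nu w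

/-- `σ` assigns each woman the less preferred of her partners in `μ` and `μ'`. -/
def Market.IsMeet (mkt : Market M W) (μ μ' σ : Matching M W) : Prop :=
  ∀ w, σ.nu w = if mkt.wRank w (μ.nu w) ≤ mkt.wRank w (μ'.nu w) then μ.nu w else μ'.nu w

/-!
Let `μ ≤ μ'` and `τ` be stable matchings. Truncating `τ` agentwise to the interval between `μ` and
`μ'` gives each agent the median of its three partners, and the result is stable: a pair blocking it
would block one of the three. Hence if `μ'` covers `μ`, the women who gain from `μ` to `μ'` either
all have `τ ≤ μ` or all have `τ ≥ μ'`.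

Suppose rotations leading from `μ₁` to `μ₁'` and from `μ₂` to `μ₂'` share the pair `(w, m)`, so that
`μ₁` and `μ₂` agree at `w`. Looking at `w` decides the dichotomy for the cover `μ₁'` of `μ₁`: every
woman `v` of the first rotation satisfies `μ₂ ≤ μ₁` (take `τ = μ₂`) and `μ₁' ≤ μ₂'` (take
`τ = μ₂'`). By symmetry both rotations involve the same women and move them between the same men.
-/

/-- The market with the roles of men and women exchanged, used to transfer facts about one side to
the other. -/
def Market.swap (mkt : Market M W) : Market W M where
  mRank := mkt.wRank
  wRank := mkt.mRank
  mRank_inj := mkt.wRank_inj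
  wRank_inj := mkt.mRank_inj

/-- A matching regarded as a matching of the market with the roles of men and women exchanged. -/
def Matching.swap (μ : Matching M W) : Matching W M where
  mu := μ.nu
  nu := μ.mu
  consistent w m := (μ.consistent m w).symm

/-- The truncation of `x` to the interval from `a` to `b` in the preference order given by the rank
function `r`. It is meant for `r a ≤ r b`. -/
def clampBy {α : Type*} (r : α → ℕ) (a b x : α) : α :=
  if r x < r a then a else if r b < r x then b else x

theorem rank_clampBy {α : Type*} {r : α → ℕ} {a b : α} (hab : r a ≤ r b) (x : α) :
    r (clampBy r a b x) = max (r a) (min (r x) (r b)) := by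
  unfold clampBy
  split_ifs <;> omega

theorem clampBy_eq_iff {α : Type*} {r : α → ℕ} (hr : r.Injective) {a b : α} (hab : r a ≤ r b)
    (x c : α) :
    clampBy r a b x = c ↔
      (a = c ∧ r x ≤ r c) ∨ (b = c ∧ r c ≤ r x) ∨ (x = c ∧ r a ≤ r c ∧ r c ≤ r b) := by
  rw [← hr.eq_iff, rank_clampBy hab, ← hr.eq_iff, ← hr.eq_iff, ← hr.eq_iff]
  omega

namespace Market

variable {mkt : Market M W} {μ μ' ν τ : Matching M W} {m : M} {w : W}

theorem mRank_eq_iff_wRank_eq (mkt : Market M W) (μ : Matching M W) (m : M) (w : W) :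
    mkt.mRank m (μ.mu m) = mkt.mRank m (some w) ↔
      mkt.wRank w (μ.nu w) = mkt.wRank w (some m) := by
  rw [(mkt.mRank_inj m).eq_iff, (mkt.wRank_inj w).eq_iff, μ.consistent]

theorem Stable.swap (hμ : mkt.Stable μ) : mkt.swap.Stable μ.swap :=
  ⟨hμ.1.symm, fun w m h => hμ.2 m w ⟨mt (μ.consistent m w).1 h.1, h.2.2, h.2.1⟩⟩

theorem Stable.mRank_none_le (hμ : mkt.Stable μ) (m : M) :
    mkt.mRank m none ≤ mkt.mRank m (μ.mu m) := by
  cases h : μ.mu m with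
  | none => exact le_rfl
  | some w => exact (hμ.1.1 m w h).le

theorem Stable.wRank_lt_of_mRank_lt (hμ : mkt.Stable μ)
    (h : mkt.mRank m (μ.mu m) < mkt.mRank m (some w)) :
    mkt.wRank w (some m) < mkt.wRank w (μ.nu w) := by
  have hle : mkt.wRank w (some m) ≤ mkt.wRank w (μ.nu w) :=
    not_lt.1 fun hw => hμ.2 m w ⟨fun heq => h.ne (congrArg _ heq), h, hw⟩
  exact hle.lt_of_ne fun heq => h.ne ((mkt.mRank_eq_iff_wRank_eq μ m w).2 heq.symm)

theorem Stable.exists_wRank_lt_of_mRank_lt (hμ : mkt.Stable μ)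
    (h : mkt.mRank m (μ.mu m) < mkt.mRank m (ν.mu m)) :
    ∃ w, ν.mu m = some w ∧ mkt.wRank w (ν.nu w) < mkt.wRank w (μ.nu w) := by
  cases hw : ν.mu m with
  | none => exact absurd (hw ▸ h) (hμ.mRank_none_le m).not_gt
  | some w =>
    rw [hw] at h
    exact ⟨w, rfl, (ν.consistent m w).1 hw ▸ hμ.wRank_lt_of_mRank_lt h⟩

theorem Stable.mRank_le_of_dom (hμ : mkt.Stable μ) (hdom : mkt.Dom μ' μ) (m : M) :
    mkt.mRank m (μ'.mu m) ≤ mkt.mRank m (μ.mu m) := by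
  by_contra! h
  obtain ⟨w, -, hw⟩ := hμ.exists_wRank_lt_of_mRank_lt h
  exact (hdom w).not_gt hw

-- `ν` maps the men preferring `ν` injectively to the women preferring `μ`, and `μ` maps these women
-- injectively back; by finiteness both maps are bijections.
theorem Stable.wRank_lt_of_mRank_lt_of_matched (hfin : Finite M ∨ Finite W) (hμ : mkt.Stable μ)
    (hν : mkt.Stable ν) (hmw : μ.mu m = some w)
    (hm : mkt.mRank m (some w) < mkt.mRank m (ν.mu m)) :
    mkt.wRank w (ν.nu w) < mkt.wRank w (some m) := by
  let A := {m : M // mkt.mRank m (μ.mu m) < mkt.mRank m (ν.mu m)}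
  let B := {w : W // mkt.wRank w (ν.nu w) < mkt.wRank w (μ.nu w)}
  have toB (a : A) : ∃ b : B, ν.nu b = some a.1 := by
    obtain ⟨b, hab, hb⟩ := hμ.exists_wRank_lt_of_mRank_lt a.2
    exact ⟨⟨b, hb⟩, (ν.consistent _ _).1 hab⟩
  have toA (b : B) : ∃ a : A, μ.mu a = some b.1 := by
    obtain ⟨a, hab, ha⟩ := hν.swap.exists_wRank_lt_of_mRank_lt (ν := μ.swap) b.2
    exact ⟨⟨a, ha⟩, (μ.consistent _ _).2 hab⟩
  choose f hf using toB
  choose g hg using toA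
  have hf_inj : f.Injective := fun a a' h =>
    Subtype.ext (Option.some_injective _ (by rw [← hf, ← hf, h]))
  have hg_inj : g.Injective := fun b b' h =>
    Subtype.ext (Option.some_injective _ (by rw [← hg, ← hg, h]))
  have : Finite A := hfin.elim (fun _ => Subtype.finite) fun _ => Finite.of_injective f hf_inj
  have hg_surj : g.Surjective := .of_comp (Finite.surjective_of_injective (hg_inj.comp hf_inj))
  obtain ⟨b, hb⟩ := hg_surj ⟨m, by rwa [hmw]⟩
  have hbw : b.1 = w := Option.some_injective _ (by rw [← hg, hb, hmw])
  exact (μ.consistent m w).1 hmw ▸ hbw ▸ b.2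

theorem Stable.mRank_le_iff_of_matched (hfin : Finite M ∨ Finite W) (hμ : mkt.Stable μ)
    (hν : mkt.Stable ν) (hmw : μ.mu m = some w) :
    mkt.mRank m (ν.mu m) ≤ mkt.mRank m (some w) ↔
      mkt.wRank w (some m) ≤ mkt.wRank w (ν.nu w) :=
  not_iff_not.1 <| by
    simpa only [not_le] using
      ⟨hμ.wRank_lt_of_mRank_lt_of_matched hfin hν hmw, hν.swap.wRank_lt_of_mRank_lt⟩

theorem Stable.le_mRank_iff_of_matched (hfin : Finite M ∨ Finite W) (hμ : mkt.Stable μ)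
    (hν : mkt.Stable ν) (hmw : μ.mu m = some w) :
    mkt.mRank m (some w) ≤ mkt.mRank m (ν.mu m) ↔
      mkt.wRank w (ν.nu w) ≤ mkt.wRank w (some m) :=
  (hμ.swap.mRank_le_iff_of_matched hfin.symm hν.swap ((μ.consistent m w).1 hmw)).symm

/-- The truncation of `τ` to the interval between stable matchings `μ` and `μ'` with `μ ≤ μ'`: each
agent gets the median of its partners in `μ`, `τ` and `μ'`. -/
def clampMatching (hfin : Finite M ∨ Finite W) (hμ : mkt.Stable μ) (hμ' : mkt.Stable μ')
    (hτ : mkt.Stable τ) (hdom : mkt.Dom μ' μ) : Matching M W where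
  mu m := clampBy (mkt.mRank m) (μ'.mu m) (μ.mu m) (τ.mu m)
  nu w := clampBy (mkt.wRank w) (μ.nu w) (μ'.nu w) (τ.nu w)
  consistent m w := by
    rw [clampBy_eq_iff (mkt.mRank_inj m) (hμ.mRank_le_of_dom hdom m),
      clampBy_eq_iff (mkt.wRank_inj w) (hdom w), ← μ.consistent, ← μ'.consistent, ← τ.consistent,
      and_congr_right (hμ'.mRank_le_iff_of_matched hfin hτ),
      and_congr_right (hμ.le_mRank_iff_of_matched hfin hτ),
      and_congr_right fun hmw => and_congr (hτ.mRank_le_iff_of_matched hfin hμ' hmw)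
        (hτ.le_mRank_iff_of_matched hfin hμ hmw), and_comm (a := mkt.wRank w (some m) ≤ _)]
    exact or_left_comm

theorem mRank_clampMatching (hfin : Finite M ∨ Finite W) (hμ : mkt.Stable μ)
    (hμ' : mkt.Stable μ') (hτ : mkt.Stable τ) (hdom : mkt.Dom μ' μ) (m : M) :
    mkt.mRank m ((clampMatching hfin hμ hμ' hτ hdom).mu m) =
      max (mkt.mRank m (μ'.mu m)) (min (mkt.mRank m (τ.mu m)) (mkt.mRank m (μ.mu m))) :=
  rank_clampBy (hμ.mRank_le_of_dom hdom m) _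

theorem wRank_clampMatching (hfin : Finite M ∨ Finite W) (hμ : mkt.Stable μ)
    (hμ' : mkt.Stable μ') (hτ : mkt.Stable τ) (hdom : mkt.Dom μ' μ) (w : W) :
    mkt.wRank w ((clampMatching hfin hμ hμ' hτ hdom).nu w) =
      max (mkt.wRank w (μ.nu w)) (min (mkt.wRank w (τ.nu w)) (mkt.wRank w (μ'.nu w))) :=
  rank_clampBy (hdom w) _

theorem stable_clampMatching (hfin : Finite M ∨ Finite W) (hμ : mkt.Stable μ)
    (hμ' : mkt.Stable μ') (hτ : mkt.Stable τ) (hdom : mkt.Dom μ' μ) :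
    mkt.Stable (clampMatching hfin hμ hμ' hτ hdom) := by
  refine ⟨⟨fun m w hmw => ?_, fun w m hwm => ?_⟩, fun m w ⟨_, hm, hw⟩ => ?_⟩
  · obtain ⟨h, -⟩ | ⟨h, -⟩ | ⟨h, -⟩ :=
      (clampBy_eq_iff (mkt.mRank_inj m) (hμ.mRank_le_of_dom hdom m) _ _).1 hmw
    exacts [hμ'.1.1 m w h, hμ.1.1 m w h, hτ.1.1 m w h]
  · obtain ⟨h, -⟩ | ⟨h, -⟩ | ⟨h, -⟩ := (clampBy_eq_iff (mkt.wRank_inj w) (hdom w) _ _).1 hwm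
    exacts [hμ.1.2 w m h, hμ'.1.2 w m h, hτ.1.2 w m h]
  · -- Both agents prefer each other to two of their three partners, hence to their partners in a
    -- common one of the three matchings.
    rw [mRank_clampMatching] at hm
    rw [wRank_clampMatching] at hw
    have hμ_lt := hμ.wRank_lt_of_mRank_lt (m := m) (w := w)
    have hμ'_lt := hμ'.wRank_lt_of_mRank_lt (m := m) (w := w)
    have hτ_lt := hτ.wRank_lt_of_mRank_lt (m := m) (w := w)
    omega

theorem Dom.nu_ne_iff (hdom : mkt.Dom μ' μ) (w : W) :
    μ'.nu w ≠ μ.nu w ↔ mkt.wRank w (μ.nu w) < mkt.wRank w (μ'.nu w) := by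
  rw [(hdom w).lt_iff_ne, (mkt.wRank_inj w).ne_iff, ne_comm]

theorem Covers.dom (hcov : mkt.Covers μ' μ) : mkt.Dom μ' μ := hcov.1.1

theorem Covers.eq_or_eq (hcov : mkt.Covers μ' μ) (hτ : mkt.Stable τ) (hle : mkt.Dom τ μ)
    (hge : mkt.Dom μ' τ) : τ = μ ∨ τ = μ' := by
  by_contra! hne
  exact hcov.2 ⟨τ, hτ, ⟨hge, hne.2.symm⟩, ⟨hle, hne.1⟩⟩

theorem Covers.forall_le_or_forall_ge (hfin : Finite M ∨ Finite W) (hμ : mkt.Stable μ)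
    (hμ' : mkt.Stable μ') (hcov : mkt.Covers μ' μ) (hτ : mkt.Stable τ) :
    (∀ w, μ'.nu w ≠ μ.nu w → mkt.wRank w (τ.nu w) ≤ mkt.wRank w (μ.nu w)) ∨
      ∀ w, μ'.nu w ≠ μ.nu w → mkt.wRank w (μ'.nu w) ≤ mkt.wRank w (τ.nu w) := by
  have hdom := hcov.dom
  have hrank := wRank_clampMatching hfin hμ hμ' hτ hdom
  have hle : mkt.Dom (clampMatching hfin hμ hμ' hτ hdom) μ := fun w =>
    (le_max_left _ _).trans_eq (hrank w).symm
  have hge : mkt.Dom μ' (clampMatching hfin hμ hμ' hτ hdom) := fun w =>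
    (hrank w).trans_le (max_le (hdom w) (min_le_right _ _))
  obtain heq | heq := hcov.eq_or_eq (stable_clampMatching hfin hμ hμ' hτ hdom) hle hge
  · refine .inl fun w hw => ?_
    have hlt := (hdom.nu_ne_iff w).1 hw
    have hw_rank := heq ▸ hrank w
    omega
  · refine .inr fun w hw => ?_
    have hlt := (hdom.nu_ne_iff w).1 hw
    have hw_rank := heq ▸ hrank w
    omega

section TwoCovers

variable {μ₁ μ₁' μ₂ μ₂' : Matching M W}

theorem Covers.le_and_le_of_common_gain (hfin : Finite M ∨ Finite W) (hμ₁ : mkt.Stable μ₁)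
    (hμ₁' : mkt.Stable μ₁') (hμ₂ : mkt.Stable μ₂) (hμ₂' : mkt.Stable μ₂')
    (hcov : mkt.Covers μ₁' μ₁) (hdom : mkt.Dom μ₂' μ₂) (hw : μ₁.nu w = μ₂.nu w)
    (hw₁ : μ₁'.nu w ≠ μ₁.nu w) (hw₂ : μ₂'.nu w ≠ μ₂.nu w) {v : W} (hv : μ₁'.nu v ≠ μ₁.nu v) :
    mkt.wRank v (μ₂.nu v) ≤ mkt.wRank v (μ₁.nu v) ∧
      mkt.wRank v (μ₁'.nu v) ≤ mkt.wRank v (μ₂'.nu v) := by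
  have hlt₁ := (hcov.dom.nu_ne_iff w).1 hw₁
  have hlt₂ := (hdom.nu_ne_iff w).1 hw₂
  rw [← hw] at hlt₂
  constructor
  · refine (hcov.forall_le_or_forall_ge hfin hμ₁ hμ₁' hμ₂).resolve_right (fun h => ?_) v hv
    exact hlt₁.not_ge (hw ▸ h w hw₁)
  · refine (hcov.forall_le_or_forall_ge hfin hμ₁ hμ₁' hμ₂').resolve_left (fun h => ?_) v hv
    exact hlt₂.not_ge (h w hw₁)

theorem Covers.nu_eq_and_nu_eq_of_common_gain (hfin : Finite M ∨ Finite W)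
    (hμ₁ : mkt.Stable μ₁) (hμ₁' : mkt.Stable μ₁') (hμ₂ : mkt.Stable μ₂)
    (hμ₂' : mkt.Stable μ₂') (hcov₁ : mkt.Covers μ₁' μ₁) (hcov₂ : mkt.Covers μ₂' μ₂)
    (hw : μ₁.nu w = μ₂.nu w) (hw₁ : μ₁'.nu w ≠ μ₁.nu w) (hw₂ : μ₂'.nu w ≠ μ₂.nu w) {v : W}
    (hv : μ₁'.nu v ≠ μ₁.nu v) :
    μ₁.nu v = μ₂.nu v ∧ μ₁'.nu v = μ₂'.nu v := by
  obtain ⟨hle, hle'⟩ :=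
    hcov₁.le_and_le_of_common_gain hfin hμ₁ hμ₁' hμ₂ hμ₂' hcov₂.dom hw hw₁ hw₂ hv
  have hlt := (hcov₁.dom.nu_ne_iff v).1 hv
  have hv₂ : μ₂'.nu v ≠ μ₂.nu v :=
    (hcov₂.dom.nu_ne_iff v).2 (hle.trans_lt (hlt.trans_le hle'))
  obtain ⟨hge, hge'⟩ :=
    hcov₂.le_and_le_of_common_gain hfin hμ₂ hμ₂' hμ₁ hμ₁' hcov₁.dom hw.symm hw₂ hw₁ hv₂
  exact ⟨mkt.wRank_inj v (hge.antisymm hle), mkt.wRank_inj v (hle'.antisymm hge')⟩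

end TwoCovers

end Market

namespace Matching.IsElimOf

variable {μ μ' μ₁ μ₁' μ₂ μ₂' : Matching M W} {ρ ρ₁ ρ₂ : List (W × M)} {x : W × M}

theorem nodup (he : μ'.IsElimOf μ ρ) : ρ.Nodup := .of_map _ he.2.1

theorem nu_fst (he : μ'.IsElimOf μ ρ) (hx : x ∈ ρ) : μ.nu x.1 = some x.2 := by
  obtain ⟨i, rfl⟩ := List.get_of_mem hx
  exact he.2.2.2.1 i

theorem mu_snd [DecidableEq W] [DecidableEq M] (he : μ'.IsElimOf μ ρ) (hx : x ∈ ρ) :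
    μ'.mu x.2 = some (ρ.formPerm x).1 := by
  obtain ⟨i, rfl⟩ := List.get_of_mem hx
  rw [he.2.2.2.2.1 i, List.get_eq_getElem, List.get_eq_getElem,
    List.formPerm_apply_getElem _ he.nodup]

theorem eq_of_fst_eq (he : μ'.IsElimOf μ ρ) {x y : W × M} (hx : x ∈ ρ) (hy : y ∈ ρ)
    (h : x.1 = y.1) : x = y :=
  List.inj_on_of_nodup_map he.2.1 hx hy h

theorem nu_ne_of_mem (he : μ'.IsElimOf μ ρ) (hx : x ∈ ρ) : μ'.nu x.1 ≠ μ.nu x.1 := by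
  classical
  intro h
  have hfst : some (ρ.formPerm x).1 = some x.1 := by
    rw [← he.mu_snd hx, μ'.consistent, h, he.nu_fst hx]
  have hfix : ρ.formPerm x = x :=
    he.eq_of_fst_eq (List.formPerm_apply_mem_of_mem hx) hx (Option.some_injective _ hfst)
  exact (List.formPerm_apply_mem_ne_self_iff _ he.nodup x hx).2 he.1 hfix

theorem mem_iff (he : μ'.IsElimOf μ ρ) :
    x ∈ ρ ↔ μ'.nu x.1 ≠ μ.nu x.1 ∧ μ.nu x.1 = some x.2 := by
  refine ⟨fun hx => ⟨he.nu_ne_of_mem hx, he.nu_fst hx⟩, fun ⟨hne, hx⟩ => ?_⟩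
  obtain ⟨y, hy, hyx⟩ := List.mem_map.1 (not_imp_comm.1 (he.2.2.2.2.2.2 x.1) hne)
  have hsnd : some y.2 = some x.2 := by rw [← he.nu_fst hy, hyx, hx]
  exact Prod.ext hyx (Option.some_injective _ hsnd) ▸ hy

theorem isRotated (he₁ : μ₁'.IsElimOf μ₁ ρ₁) (he₂ : μ₂'.IsElimOf μ₂ ρ₂)
    (h₁ : ∀ w, μ₁'.nu w ≠ μ₁.nu w → μ₁.nu w = μ₂.nu w ∧ μ₁'.nu w = μ₂'.nu w)
    (h₂ : ∀ w, μ₂'.nu w ≠ μ₂.nu w → μ₂.nu w = μ₁.nu w ∧ μ₂'.nu w = μ₁'.nu w) :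
    ρ₁.IsRotated ρ₂ := by
  classical
  have hmem (x : W × M) : x ∈ ρ₁ ↔ x ∈ ρ₂ := by
    rw [he₁.mem_iff, he₂.mem_iff]
    constructor
    · rintro ⟨hne, hx⟩
      rw [← (h₁ _ hne).1, ← (h₁ _ hne).2]
      exact ⟨hne, hx⟩
    · rintro ⟨hne, hx⟩
      rw [← (h₂ _ hne).1, ← (h₂ _ hne).2]
      exact ⟨hne, hx⟩
  have hperm : ρ₁.formPerm = ρ₂.formPerm := by
    ext1 x
    by_cases hx₁ : x ∈ ρ₁
    · have hx₂ := (hmem x).1 hx₁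
      have hy₁ := List.formPerm_apply_mem_of_mem hx₁
      refine he₂.eq_of_fst_eq ((hmem _).1 hy₁) (List.formPerm_apply_mem_of_mem hx₂)
        (Option.some_injective _ ?_)
      rw [← he₂.mu_snd hx₂, eq_comm, μ₂'.consistent, ← (h₁ _ (he₁.nu_ne_of_mem hy₁)).2,
        ← μ₁'.consistent, he₁.mu_snd hx₁]
    · rw [List.formPerm_apply_of_notMem hx₁, List.formPerm_apply_of_notMem (mt (hmem x).2 hx₁)]
  have hlen : ¬ (ρ₁.length ≤ 1 ∧ ρ₂.length ≤ 1) := fun h => (Nat.lt_of_succ_le he₁.1).not_ge h.1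
  exact ((List.formPerm_eq_formPerm_iff he₁.nodup he₂.nodup).1 hperm).resolve_right hlen

end Matching.IsElimOf

theorem pair_in_at_most_one_rotation_general {M W : Type*} (hfin : Finite M ∨ Finite W)
    {mkt : Market M W} {ρ₁ ρ₂ : List (W × M)} (h₁ : mkt.InPi ρ₁) (h₂ : mkt.InPi ρ₂) {w : W}
    {m : M} (hmem₁ : (w, m) ∈ ρ₁) (hmem₂ : (w, m) ∈ ρ₂) : ρ₁.IsRotated ρ₂ := by
  obtain ⟨μ₁, hμ₁, μ₁', he₁, hμ₁', hcov₁⟩ := h₁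
  obtain ⟨μ₂, hμ₂, μ₂', he₂, hμ₂', hcov₂⟩ := h₂
  have hw : μ₁.nu w = μ₂.nu w := (he₁.nu_fst hmem₁).trans (he₂.nu_fst hmem₂).symm
  have hw₁ : μ₁'.nu w ≠ μ₁.nu w := he₁.nu_ne_of_mem hmem₁
  have hw₂ : μ₂'.nu w ≠ μ₂.nu w := he₂.nu_ne_of_mem hmem₂
  exact he₁.isRotated he₂
    (fun _ => hcov₁.nu_eq_and_nu_eq_of_common_gain hfin hμ₁ hμ₁' hμ₂ hμ₂' hcov₂ hw hw₁ hw₂)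
    (fun _ => hcov₂.nu_eq_and_nu_eq_of_common_gain hfin hμ₂ hμ₂' hμ₁ hμ₁' hcov₁ hw.symm hw₂ hw₁)

/-- a pair `(w, m)` appears in at most one rotation in `Π`: any
two rotations containing the pair are equal up to cyclic shift. -/
theorem pair_in_at_most_one_rotation {M W : Type*} [Fintype M] [Fintype W]
    (mkt : Market M W) (ρ1 ρ2 : List (W × M))
    (h1 : mkt.InPi ρ1) (h2 : mkt.InPi ρ2)
    (w : W) (m : M) (hmem1 : (w, m) ∈ ρ1) (hmem2 : (w, m) ∈ ρ2) :
    ρ1.IsRotated ρ2 :=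
  pair_in_at_most_one_rotation_general (.inl inferInstance) h1 h2 hmem1 hmem2
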